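/- Let G be a minimal candidate with bipartition (A,B). If X ⊆ A is nonempty and G\X has exactly |X| components, then at most one of these components has more than one vertex. -/

import Mathlib

/-!
Write `f(U) = |B ∩ U| - |A ∩ U|`. In a minimal candidate, a nonempty proper vertex set `U` which
contains all neighbours of its `A`-vertices satisfies `f(U) ≥ 1`, since otherwise the subgraph
induced on `U` would be a smaller candidate (`closed_lt`). This has two consequences.

* `G` is connected and has no cutvertex (`exists_walk_avoiding`): if `K`, with `|K| ≤ 1`, separates
  `G` into `D` and `E`, then adding the inequalities for `D ∪ (B ∩ K)` and `E ∪ (B ∩ K)` gives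
  `f(V) ≥ 1`, contrary to `|A| ≥ |B|`.
* Each component `C` of `G \ X` has `f(C) ≥ 1`, while the values `f(C)` sum to at most `|X|`. As
  there are `|X|` components, each of them has `f(C) = 1`.

Let `S ≠ T` be two components with more than one vertex. By Menger's theorem for two paths
(`exists_two_disjoint`) there are two disjoint `S`–`T` paths, each having only its ends in `S ∪ T`.
Their ends lie in `B`, because they have neighbours in `X ⊆ A`. Contract each path to a single vertex
and delete everything else outside `S ∪ T`: the result is `G[S]` and `G[T]` glued along two pairs of
`B`-vertices. It has no `K_6` minor, its `A`-vertices keep their degrees, and its excess of `B` over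
`A` is `f(S) + f(T) - 2 = 0`. So it is a smaller candidate, a contradiction (`two_pieces`).
-/

open SimpleGraph Function

/-- `G` has a `K_t` minor: there are `t` nonempty, pairwise disjoint "branch sets",
each inducing a connected subgraph, with an edge of `G` between any two of them.
(This is the "`t`-cluster" formulation, equivalent to `K_t` being obtainable from a
subgraph of `G` by contracting edges.) -/
def HasCliqueMinor {V : Type*} (G : SimpleGraph V) (t : ℕ) : Prop :=
  ∃ f : Fin t → Set V,
    (∀ i, (f i).Nonempty) ∧
    (∀ i, (G.induce (f i)).Connected) ∧
    (Pairwise fun i j => Disjoint (f i) (f j)) ∧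
    ∀ i j, i ≠ j → ∃ u ∈ f i, ∃ v ∈ f j, G.Adj u v

/-- `(A, B)` is a bipartition of `G`: the parts partition the vertex set and
every edge joins `A` to `B`. -/
def IsBipartitionWith {V : Type*} (G : SimpleGraph V) (A B : Set V) : Prop :=
  (∀ v, v ∈ A ∨ v ∈ B) ∧ (∀ v, ¬(v ∈ A ∧ v ∈ B)) ∧
    ∀ ⦃u v⦄, G.Adj u v → (u ∈ A ↔ v ∈ B)

/-- A candidate: a graph with a bipartition `(A,B)`, `|A| ≥ |B| > 0`, every vertex
of `A` of degree at least six, and no `K_6` minor. -/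
def IsCandidate {V : Type*} (G : SimpleGraph V) (A B : Set V) : Prop :=
  IsBipartitionWith G A B ∧ B.ncard ≤ A.ncard ∧ B.Nonempty ∧
    (∀ a ∈ A, 6 ≤ (G.neighborSet a).ncard) ∧ ¬ HasCliqueMinor G 6

/-- A minimal candidate: a candidate minimizing `|V(G)| + |E(G)|` among all
(finite) candidates. -/
def IsMinimalCandidate {V : Type*} [Fintype V] (G : SimpleGraph V) (A B : Set V) : Prop :=
  IsCandidate G A B ∧
    ∀ (n : ℕ) (G' : SimpleGraph (Fin n)) (A' B' : Set (Fin n)),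
      IsCandidate G' A' B' →
        Fintype.card V + G.edgeSet.ncard ≤ n + G'.edgeSet.ncard

namespace MinCand

/-! ### Clique minors of contractions -/

/-- A clique minor of `G'` lifts to `G` when `G'` is modelled in `G` by disjoint connected
branch sets `M x`. -/
theorem cliqueMinor_lift {V W : Type*} {G : SimpleGraph V} {G' : SimpleGraph W} {t : ℕ}
    (M : W → Set V) (hM : ∀ x, (G.induce (M x)).Connected)
    (hd : ∀ x y, x ≠ y → Disjoint (M x) (M y))
    (hadj : ∀ x y, G'.Adj x y → ∃ u ∈ M x, ∃ v ∈ M y, G.Adj u v)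
    (h : HasCliqueMinor G' t) : HasCliqueMinor G t := by
  obtain ⟨f, hne, hc, hdis, he⟩ := h
  refine ⟨fun i => ⋃ x ∈ f i, M x, ?_, ?_, ?_, ?_⟩
  · intro i
    obtain ⟨x, hx⟩ := hne i
    obtain ⟨⟨u, hu⟩⟩ := (hM x).nonempty
    exact ⟨u, Set.mem_biUnion hx hu⟩
  · intro i
    set F := f i with hF
    set U : Set V := ⋃ x ∈ F, M x with hU
    have hsub : ∀ x ∈ F, M x ⊆ U := fun x hx => Set.subset_biUnion_of_mem (u := M) hx
    have same : ∀ x (hx : x ∈ F) p q (hp : p ∈ M x) (hq : q ∈ M x),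
        (G.induce U).Reachable ⟨p, hsub x hx hp⟩ ⟨q, hsub x hx hq⟩ := by
      intro x hx p q hp hq
      exact ((hM x).preconnected ⟨p, hp⟩ ⟨q, hq⟩).map
        (SimpleGraph.induceHomOfLE G (hsub x hx)).toHom
    have key : ∀ (x y : F) (w : (G'.induce F).Walk x y) p q (hp : p ∈ M x) (hq : q ∈ M y),
        (G.induce U).Reachable ⟨p, hsub x x.2 hp⟩ ⟨q, hsub y y.2 hq⟩ := by
      intro x y w
      induction w with
      | nil => intro p q hp hq; exact same _ (Subtype.prop _) p q hp hq
      | @cons a b c h w ih =>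
        intro p q hp hq
        obtain ⟨u, hu, v, hv, huv⟩ := hadj _ _ (SimpleGraph.induce_adj.1 h)
        have e : (G.induce U).Adj ⟨u, hsub a a.2 hu⟩ ⟨v, hsub b b.2 hv⟩ := huv
        exact ((same a a.2 p u hp hu).trans e.reachable).trans (ih v q hv hq)
    obtain ⟨x, hx⟩ := hne i
    obtain ⟨⟨u, hu⟩⟩ := (hM x).nonempty
    have : Nonempty U := ⟨⟨u, hsub x hx hu⟩⟩
    refine SimpleGraph.Connected.mk ?_
    rintro ⟨p, hp⟩ ⟨q, hq⟩
    obtain ⟨x, hx, hp'⟩ := Set.mem_iUnion₂.1 hp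
    obtain ⟨y, hy, hq'⟩ := Set.mem_iUnion₂.1 hq
    obtain ⟨w⟩ := (hc i).preconnected ⟨x, hx⟩ ⟨y, hy⟩
    exact key ⟨x, hx⟩ ⟨y, hy⟩ w p q hp' hq'
  · intro i j hij
    simp only [Set.disjoint_iUnion_left, Set.disjoint_iUnion_right]
    intro x hx y hy
    apply hd
    rintro rfl
    exact Set.disjoint_left.1 (hdis hij) ‹_› ‹_›
  · intro i j hij
    obtain ⟨x, hx, y, hy, h⟩ := he i j hij
    obtain ⟨u, hu, v, hv, huv⟩ := hadj _ _ h
    exact ⟨u, Set.mem_biUnion hx hu, v, Set.mem_biUnion hy hv, huv⟩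

/-! ### Two disjoint paths -/

/-- The final segment of a walk starting at its last vertex satisfying `P`. -/
theorem exists_last {V : Type*} {G : SimpleGraph V} (P : V → Prop) {a v : V}
    (R : G.Walk a v) (h : ∃ y ∈ R.support, P y) :
    ∃ (z : V) (R' : G.Walk z v), P z ∧ (∀ x ∈ R'.support, x ∈ R.support) ∧
      ∀ x ∈ R'.support, P x → x = z := by
  induction R with
  | nil =>
    obtain ⟨y, hy, hP⟩ := h
    rw [SimpleGraph.Walk.support_nil, List.mem_singleton] at hy
    subst hy
    exact ⟨_, .nil, hP, by simp, by simp⟩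
  | @cons a b c e p ih =>
    by_cases hp : ∃ y ∈ p.support, P y
    · obtain ⟨z, R', h1, h2, h3⟩ := ih hp
      exact ⟨z, R', h1, fun x hx => by simp [h2 x hx], h3⟩
    · push Not at hp
      obtain ⟨y, hy, hPy⟩ := h
      rw [SimpleGraph.Walk.support_cons, List.mem_cons] at hy
      rcases hy with rfl | hy
      · refine ⟨y, .cons e p, hPy, by simp, ?_⟩
        intro x hx hPx
        rw [SimpleGraph.Walk.support_cons, List.mem_cons] at hx
        rcases hx with rfl | hx
        · rfl
        · exact absurd hPx (hp x hx)
      · exact absurd hPy (hp y hy)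

/-- Every walk from `S` to `T` contains one which meets `S` only in its first vertex and `T` only
in its last. -/
theorem trim {V : Type*} {G : SimpleGraph V} {S T : Set V} {s t : V} (R : G.Walk s t)
    (hs : s ∈ S) (ht : t ∈ T) :
    ∃ (s' t' : V) (R' : G.Walk s' t'), s' ∈ S ∧ t' ∈ T ∧ (∀ x ∈ R'.support, x ∈ R.support) ∧
      (∀ x ∈ R'.support, x ∈ S → x = s') ∧ (∀ x ∈ R'.support, x ∈ T → x = t') := by
  obtain ⟨z, R1, hz, h1, h2⟩ := exists_last (· ∈ S) R ⟨s, R.start_mem_support, hs⟩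
  obtain ⟨y, R2, hy, h3, h4⟩ := exists_last (· ∈ T) R1.reverse ⟨t, by simp, ht⟩
  have h5 : ∀ x ∈ R2.reverse.support, x ∈ R1.support := fun x hx => by
    simpa using h3 x (by simpa using hx)
  exact ⟨z, y, R2.reverse, hz, hy, fun x hx => h1 x (h5 x hx), fun x hx => h2 x (h5 x hx),
    fun x hx => h4 x (by simpa using hx)⟩

/-- One step of the fan construction: two internally disjoint paths to `w` are rerouted to
internally disjoint paths to a neighbour `v` of `w`, by means of the last part `R` of a
walk avoiding `w`, which leaves the two paths for the last time at a vertex `z` of the first. -/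
theorem extend_fan {V : Type*} {H : SimpleGraph V} {u w v z : V} (q1 q2 : H.Walk u w)
    (hp1 : q1.IsPath) (hd : ∀ x ∈ q1.support, x ∈ q2.support → x = u ∨ x = w)
    (e : H.Adj w v) (R : H.Walk z v) (hz : z ∈ q1.support) (hwR : w ∉ R.support)
    (hR : ∀ x ∈ R.support, x ∈ q1.support ∨ x ∈ q2.support → x = z) :
    ∃ r1 r2 : H.Walk u v, r1.IsPath ∧ r2.IsPath ∧
      ∀ x ∈ r1.support, x ∈ r2.support → x = u ∨ x = v := by
  classical
  have hzw : z ≠ w := by rintro rfl; exact hwR R.start_mem_support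
  refine ⟨((q1.takeUntil z hz).append R).bypass, (q2.concat e).bypass,
    SimpleGraph.Walk.bypass_isPath _, SimpleGraph.Walk.bypass_isPath _, ?_⟩
  intro x hx1 hx2
  replace hx1 := SimpleGraph.Walk.support_bypass_subset_support _ hx1
  replace hx2 := SimpleGraph.Walk.support_bypass_subset_support _ hx2
  rw [SimpleGraph.Walk.mem_support_append_iff] at hx1
  rw [SimpleGraph.Walk.support_concat, List.mem_append, List.mem_singleton] at hx2
  rcases hx2 with hx2 | hx2
  · left
    rcases hx1 with hx1 | hx1
    · rcases hd x (q1.support_takeUntil_subset_support hz hx1) hx2 with h | rfl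
      · exact h
      · exact absurd hx1 (SimpleGraph.Walk.endpoint_notMem_support_takeUntil hp1 hz hzw.symm)
    · have := hR x hx1 (Or.inr hx2)
      subst this
      exact (hd x hz hx2).resolve_right hzw
  · exact Or.inr hx2

/-- Whitney's theorem: if no vertex other than `u` separates anything from `u`, then there are
two internally disjoint paths from `u` to any other vertex. -/
theorem exists_fan {V : Type*} {H : SimpleGraph V} (u : V)
    (hc : ∀ w x, w ≠ u → x ≠ w → ∃ p : H.Walk u x, w ∉ p.support) {v : V} (p : H.Walk v u)
    (huv : v ≠ u) :
    ∃ q1 q2 : H.Walk u v, q1.IsPath ∧ q2.IsPath ∧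
      ∀ x ∈ q1.support, x ∈ q2.support → x = u ∨ x = v := by
  induction p with
  | nil => exact absurd rfl huv
  | @cons v w u e p ih =>
    by_cases hw : w = u
    · subst hw
      refine ⟨.cons e.symm .nil, .cons e.symm .nil, ?_, ?_, ?_⟩ <;> simp [huv.symm]
    · obtain ⟨q1, q2, hp1, hp2, hd⟩ := ih hc hw
      obtain ⟨R, hR⟩ := hc w v hw e.ne
      obtain ⟨z, R', hz, h1, h2⟩ := exists_last (fun x => x ∈ q1.support ∨ x ∈ q2.support) R
        ⟨u, by simp, by simp⟩
      rcases hz with hz | hz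
      · exact extend_fan q1 q2 hp1 hd e.symm R' hz (fun h => hR (h1 _ h)) h2
      · exact extend_fan q2 q1 hp2 (fun x a b => hd x b a) e.symm R' hz (fun h => hR (h1 _ h))
          (fun x hx h => h2 x hx h.symm)

/-- The graph `G` with two new vertices, `inr true` adjacent to all of `S` and `inr false`
adjacent to all of `T`. -/
def addTerminals {V : Type*} (G : SimpleGraph V) (S T : Set V) : SimpleGraph (V ⊕ Bool) where
  Adj
    | .inl a, .inl b => G.Adj a b
    | .inl a, .inr true => a ∈ S
    | .inl a, .inr false => a ∈ T
    | .inr true, .inl a => a ∈ S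
    | .inr false, .inl a => a ∈ T
    | .inr _, .inr _ => False
  symm := ⟨by rintro (a | _ | _) (b | _ | _) h <;> first | exact h | exact h.symm⟩
  loopless := ⟨by rintro (a | _ | _) h <;> first | exact G.irrefl h | exact h⟩

/-- A walk in `addTerminals G S T` from a vertex of `G` to `inr false` which avoids `inr true`
contains a walk of `G` ending in `T`. -/
theorem walk_of_addTerminals {V : Type*} {G : SimpleGraph V} {S T : Set V} {x y : V ⊕ Bool}
    (p : (addTerminals G S T).Walk x y) (hy : y = .inr false) (hs : .inr true ∉ p.support)
    (a : V) (ha : x = .inl a) :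
    ∃ (t : V) (q : G.Walk a t), t ∈ T ∧ ∀ z ∈ q.support, .inl z ∈ p.support := by
  induction p generalizing a with
  | nil => simp [hy] at ha
  | @cons x w y e p ih =>
    subst ha
    rw [SimpleGraph.Walk.support_cons, List.mem_cons, not_or] at hs
    match w, e, p, ih, hs with
    | .inl b, e, p, ih, hs =>
      obtain ⟨t, q, ht, hq⟩ := ih hy hs.2 b rfl
      have e' : G.Adj a b := e
      refine ⟨t, .cons e' q, ht, ?_⟩
      intro z hz
      rw [SimpleGraph.Walk.support_cons, List.mem_cons] at hz ⊢
      rcases hz with rfl | hz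
      · exact Or.inl rfl
      · exact Or.inr (hq z hz)
    | .inr true, e, p, ih, hs => exact absurd p.start_mem_support hs.2
    | .inr false, e, p, ih, hs =>
      have e' : a ∈ T := e
      refine ⟨a, .nil, e', ?_⟩
      intro z hz
      rw [SimpleGraph.Walk.support_nil, List.mem_singleton] at hz
      subst hz
      simp

/-- Two vertex-disjoint `S`–`T` paths (Menger's theorem for two paths). -/
theorem exists_two_disjoint {V : Type*} {G : SimpleGraph V} {S T : Set V}
    (hS : S.Nontrivial) (hT : T.Nontrivial) (hG : ∀ x y : V, Nonempty (G.Walk x y))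
    (hc : ∀ w x y : V, x ≠ w → y ≠ w → ∃ p : G.Walk x y, w ∉ p.support) :
    ∃ (s1 t1 s2 t2 : V) (p1 : G.Walk s1 t1) (p2 : G.Walk s2 t2),
      s1 ∈ S ∧ s2 ∈ S ∧ t1 ∈ T ∧ t2 ∈ T ∧ ∀ x ∈ p1.support, x ∉ p2.support := by
  let H := addTerminals G S T
  let f : G →g H := ⟨Sum.inl, fun h => h⟩
  have hf : ∀ x, f x = .inl x := fun _ => rfl
  have hst : ∀ s ∈ S, H.Adj (.inr true) (.inl s) := fun s hs => hs
  have htt : ∀ t ∈ T, H.Adj (.inl t) (.inr false) := fun s hs => hs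
  have hH : ∀ w x, w ≠ .inr true → x ≠ w → ∃ p : H.Walk (.inr true) x, w ∉ p.support := by
    rintro (w | _ | _) (x | _ | _) h1 h2
    · obtain ⟨s, hs, hsw⟩ := hS.exists_ne w
      obtain ⟨p, hp⟩ := hc w s x hsw (fun h => h2 (by rw [h]))
      refine ⟨.cons (hst s hs) (p.map f), ?_⟩
      simpa [hf] using hp
    · obtain ⟨s, hs, hsw⟩ := hS.exists_ne w
      obtain ⟨t, ht, htw⟩ := hT.exists_ne w
      obtain ⟨p, hp⟩ := hc w s t hsw htw
      refine ⟨.cons (hst s hs) ((p.map f).concat (htt t ht)), ?_⟩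
      simpa [hf, SimpleGraph.Walk.support_concat] using hp
    · exact ⟨.nil, by simp⟩
    · obtain ⟨s, hs⟩ := hS.nonempty
      obtain ⟨p⟩ := hG s x
      refine ⟨.cons (hst s hs) (p.map f), ?_⟩
      simp [hf]
    · exact absurd rfl h2
    · exact ⟨.nil, by simp⟩
    · exact absurd rfl h1
    · exact absurd rfl h1
    · exact absurd rfl h1
  have p0 : Nonempty (H.Walk (.inr false) (.inr true)) := by
    obtain ⟨s, hs⟩ := hS.nonempty
    obtain ⟨t, ht⟩ := hT.nonempty
    obtain ⟨p⟩ := hG t s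
    exact ⟨.cons (htt t ht).symm ((p.map f).concat (hst s hs).symm)⟩
  obtain ⟨p0⟩ := p0
  obtain ⟨q1, q2, h1, h2, hd⟩ := exists_fan _ hH p0 (by simp)
  have first : ∀ q : H.Walk (.inr true) (.inr false), q.IsPath →
      ∃ (s t : V) (p : G.Walk s t), s ∈ S ∧ t ∈ T ∧ ∀ z ∈ p.support, .inl z ∈ q.support := by
    intro q hq
    cases q with
    | @cons _ b _ e q =>
      rw [SimpleGraph.Walk.cons_isPath_iff] at hq
      match b, e, q, hq with
      | .inl s, e, q, hq =>
        obtain ⟨t, p, ht, hp⟩ := walk_of_addTerminals q rfl hq.2 s rfl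
        exact ⟨s, t, p, e, ht, fun z hz => by simp [hp z hz]⟩
  obtain ⟨s1, t1, p1, hs1, ht1, hp1⟩ := first q1 h1
  obtain ⟨s2, t2, p2, hs2, ht2, hp2⟩ := first q2 h2
  refine ⟨s1, t1, s2, t2, p1, p2, hs1, hs2, ht1, ht2, ?_⟩
  intro x hx1 hx2
  simpa using hd _ (hp1 x hx1) (hp2 x hx2)

/-! ### Minimality -/

theorem bip_compl {V : Type*} {G : SimpleGraph V} {A B : Set V} (h : IsBipartitionWith G A B)
    (x : V) : x ∈ B ↔ x ∉ A :=
  ⟨fun hb ha => h.2.1 x ⟨ha, hb⟩, fun ha => (h.1 x).resolve_left ha⟩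

theorem candidate_of_iso {V W : Type*} {G : SimpleGraph V} {G' : SimpleGraph W}
    {A B : Set V} (e : G ≃g G') (h : IsCandidate G A B) :
    IsCandidate G' (e.symm ⁻¹' A) (e.symm ⁻¹' B) := by
  obtain ⟨⟨h1, h2, h3⟩, h4, h5, h6, h7⟩ := h
  have hcard : ∀ C : Set V, (e.symm ⁻¹' C).ncard = C.ncard := fun C => by
    apply Set.ncard_preimage_of_injective_subset_range e.symm.injective
    intro x _
    exact e.symm.surjective x
  refine ⟨⟨fun v => h1 _, fun v => h2 _, ?_⟩, ?_, ?_, ?_, ?_⟩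
  · intro u v huv
    exact h3 (e.symm.map_rel_iff.2 huv)
  · rw [hcard, hcard]; exact h4
  · obtain ⟨b, hb⟩ := h5
    exact ⟨e b, by simpa using hb⟩
  · intro a ha
    refine (h6 _ ha).trans_eq ?_
    have : G'.neighborSet a = e.symm ⁻¹' (G.neighborSet (e.symm a)) := by
      ext x
      exact (e.symm.map_rel_iff (a := a) (b := x)).symm
    rw [this, hcard]
  · intro hm
    refine h7 (cliqueMinor_lift (fun x => {e.symm x}) ?_ ?_ ?_ hm)
    · intro x
      exact SimpleGraph.Connected.of_subsingleton
    · intro x y hxy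
      simpa using hxy
    · intro x y hxy
      exact ⟨_, rfl, _, rfl, e.symm.map_rel_iff.2 hxy⟩

/-- Minimality of a candidate against candidates on arbitrary finite vertex types. -/
theorem min_card_le {V W : Type*} [Fintype V] [Finite W] {G : SimpleGraph V} {A B : Set V}
    (hmin : IsMinimalCandidate G A B) {G' : SimpleGraph W} {A' B' : Set W}
    (h : IsCandidate G' A' B') :
    Fintype.card V + G.edgeSet.ncard ≤ Nat.card W + G'.edgeSet.ncard := by
  let e := Finite.equivFin W
  let i := SimpleGraph.Iso.map e G'
  have := hmin.2 _ _ _ _ (candidate_of_iso i h)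
  have h2 : (SimpleGraph.map e G').edgeSet.ncard = G'.edgeSet.ncard :=
    (Set.ncard_congr' i.mapEdgeSet).symm
  rw [← h2]
  exact this

/-- The minor on `W` in which `x` and `y` are adjacent when an edge of `G` joins the
fibre of `φ` over `x` to the fibre over `y`. -/
def quot {V : Type*} (G : SimpleGraph V) (W : Set V) (φ : V → V) : SimpleGraph W where
  Adj x y := x ≠ y ∧ ∃ u v, φ u = x ∧ φ v = y ∧ G.Adj u v
  symm := ⟨fun _ _ ⟨h, u, v, hu, hv, e⟩ => ⟨h.symm, v, u, hv, hu, e.symm⟩⟩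
  loopless := ⟨fun _ h => h.1 rfl⟩

/-- A minimal candidate admits no proper candidate minor with vertex set `W ⊂ V(G)`; the minor is
given by a map `φ` which respects the bipartition and by connected branch sets `M x`. -/
theorem no_smaller {V : Type*} [Fintype V] {G : SimpleGraph V} {A B : Set V}
    (hmin : IsMinimalCandidate G A B) (W : Set V) (hW : W ≠ Set.univ) (φ : V → V)
    (hφA : ∀ u, φ u ∈ A ↔ u ∈ A) (hφa : ∀ a ∈ A, φ a = a)
    (hinj : ∀ a ∈ A, a ∈ W → Set.InjOn φ (G.neighborSet a))
    (hmaps : ∀ a ∈ A, a ∈ W → ∀ b, G.Adj a b → φ b ∈ W)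
    (hne : (B ∩ W).Nonempty) (M : V → Set V)
    (hM : ∀ x ∈ W, (G.induce (M x)).Connected)
    (hd : ∀ x ∈ W, ∀ y ∈ W, x ≠ y → Disjoint (M x) (M y))
    (hφM : ∀ u, φ u ∈ W → u ∈ M (φ u)) :
    (A ∩ W).ncard < (B ∩ W).ncard := by
  by_contra! hcard
  obtain ⟨⟨hbip, -, -, hdeg, hnm⟩, -⟩ := id hmin
  have hB := bip_compl hbip
  have hsub : ∀ C : Set V, (Subtype.val ⁻¹' C : Set W).ncard = (C ∩ W).ncard := fun C => by
    rw [← Set.ncard_image_of_injective _ Subtype.val_injective, Subtype.image_preimage_coe,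
      Set.inter_comm]
  have hcand : IsCandidate (quot G W φ) (Subtype.val ⁻¹' A) (Subtype.val ⁻¹' B) := by
    refine ⟨⟨fun v => hbip.1 _, fun v => hbip.2.1 _, ?_⟩, ?_, ?_, ?_, ?_⟩
    · rintro ⟨x, hx⟩ ⟨y, hy⟩ ⟨-, u, v, hu, hv, e⟩
      have := hbip.2.2 e
      simp only [Set.mem_preimage]
      simp only at hu hv
      rw [← hu, ← hv, hB, hφA, hφA, ← hB]
      exact this
    · rw [hsub, hsub]; exact hcard
    · obtain ⟨b, hb, hbW⟩ := hne
      exact ⟨⟨b, hbW⟩, hb⟩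
    · rintro ⟨a, haW⟩ ha
      have ha' : a ∈ A := ha
      refine (hdeg a ha).trans ?_
      rw [← (hinj a ha haW).ncard_image,
        ← Set.ncard_image_of_injective _ Subtype.val_injective]
      apply Set.ncard_le_ncard _ (Set.toFinite _)
      rintro _ ⟨b, hb, rfl⟩
      have hab : G.Adj a b := hb
      refine ⟨⟨φ b, hmaps a ha haW b hab⟩, ⟨?_, a, b, hφa a ha, rfl, hab⟩, rfl⟩
      intro h
      have h' : a = φ b := congrArg Subtype.val h
      have hbB := (hbip.2.2 hab).1 ha'
      rw [hB, ← hφA, ← h'] at hbB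
      exact hbB ha'
    · intro hm
      refine hnm (cliqueMinor_lift (fun x : W => M x) (fun x => hM x x.2) ?_ ?_ hm)
      · intro x y hxy
        exact hd x x.2 y y.2 (fun h => hxy (Subtype.ext h))
      · rintro ⟨x, hx⟩ ⟨y, hy⟩ ⟨-, u, v, hu, hv, e⟩
        simp only at hu hv
        subst hu hv
        exact ⟨u, hφM u hx, v, hφM v hy, e⟩
  have h1 := min_card_le hmin hcand
  have h2 : Nat.card W < Fintype.card V := by
    rw [← Nat.card_eq_fintype_card (α := V), ← Set.ncard_univ V]
    exact Set.ncard_lt_ncard (Set.ssubset_univ_iff.2 hW)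
  have h3 : (quot G W φ).edgeSet.ncard ≤ G.edgeSet.ncard := by
    calc (quot G W φ).edgeSet.ncard
        = (Sym2.map Subtype.val '' (quot G W φ).edgeSet).ncard :=
          (Set.ncard_image_of_injective _ (Sym2.map.injective Subtype.val_injective)).symm
      _ ≤ (Sym2.map φ '' G.edgeSet).ncard := by
          apply Set.ncard_le_ncard _ (Set.toFinite _)
          rintro _ ⟨z, hz, rfl⟩
          induction z with
          | _ x y =>
            obtain ⟨-, u, v, hu, hv, e⟩ := hz
            refine ⟨s(u, v), e, ?_⟩
            simp [hu, hv]
      _ ≤ G.edgeSet.ncard := Set.ncard_image_le (Set.toFinite _)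
  omega

/-- In a minimal candidate, a nonempty proper vertex set `U` containing all neighbours of its
`A`-vertices has more vertices in `B` than in `A`. -/
theorem closed_lt {V : Type*} [Fintype V] {G : SimpleGraph V} {A B : Set V}
    (hmin : IsMinimalCandidate G A B) (U : Set V) (hU : U ≠ Set.univ) (hne : U.Nonempty)
    (hcl : ∀ a ∈ A, a ∈ U → ∀ b, G.Adj a b → b ∈ U) :
    (A ∩ U).ncard < (B ∩ U).ncard := by
  refine no_smaller hmin U hU id (by simp) (by simp) (fun a _ _ => Set.injOn_id _) hcl ?_
    (fun x => {x}) ?_ ?_ ?_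
  · obtain ⟨⟨hbip, -, -, hdeg, hnm⟩, -⟩ := hmin
    obtain ⟨x, hx⟩ := hne
    rcases hbip.1 x with ha | hb
    · obtain ⟨b, hb⟩ := Set.nonempty_of_ncard_ne_zero (s := G.neighborSet x)
        (by have := hdeg x ha; omega)
      exact ⟨b, (hbip.2.2 hb).1 ha, hcl x ha hx b hb⟩
    · exact ⟨x, hb, hx⟩
  · intro x _
    exact SimpleGraph.Connected.of_subsingleton
  · intro x _ y _ hxy
    simpa using hxy
  · intro u _
    rfl

/-- A minimal candidate has no cutset `K` of at most one vertex. -/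
theorem exists_walk_avoiding {V : Type*} [Fintype V] {G : SimpleGraph V} {A B : Set V}
    (hmin : IsMinimalCandidate G A B) (K : Set V) (hK : K.ncard ≤ 1) (x y : V)
    (hx : x ∉ K) (hy : y ∉ K) : ∃ p : G.Walk x y, ∀ z ∈ p.support, z ∉ K := by
  by_contra hno
  obtain ⟨⟨hbip, hAB, -, -, -⟩, -⟩ := id hmin
  have hB := bip_compl hbip
  let D : Set V := {z | ∃ p : G.Walk x z, ∀ z ∈ p.support, z ∉ K}
  let E : Set V := {z | z ∉ D ∧ z ∉ K}
  have hxD : x ∈ D := ⟨.nil, by simpa using hx⟩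
  have hyE : y ∈ E := ⟨hno, hy⟩
  have hDK : ∀ z ∈ D, z ∉ K := fun z ⟨p, hp⟩ => hp z p.end_mem_support
  have hDcl : ∀ a ∈ D, ∀ b, G.Adj a b → b ∉ K → b ∈ D := by
    rintro a ⟨p, hp⟩ b hab hb
    refine ⟨p.concat hab, ?_⟩
    intro z hz
    rw [SimpleGraph.Walk.support_concat, List.mem_append, List.mem_singleton] at hz
    rcases hz with hz | rfl
    · exact hp z hz
    · exact hb
  have h1 := closed_lt hmin (D ∪ (B ∩ K))
    (fun h => by
      have : y ∈ D ∪ (B ∩ K) := h ▸ Set.mem_univ y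
      rcases this with h | h
      · exact hyE.1 h
      · exact hy h.2) ⟨x, Or.inl hxD⟩ (by
      rintro a ha (haD | haB) b hab
      · by_cases hbK : b ∈ K
        · exact Or.inr ⟨(hbip.2.2 hab).1 ha, hbK⟩
        · exact Or.inl (hDcl a haD b hab hbK)
      · exact absurd ha ((hB a).1 haB.1))
  have h2 := closed_lt hmin (E ∪ (B ∩ K))
    (fun h => by
      have : x ∈ E ∪ (B ∩ K) := h ▸ Set.mem_univ x
      rcases this with h | h
      · exact h.1 hxD
      · exact hx h.2) ⟨y, Or.inl hyE⟩ (by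
      rintro a ha (haE | haB) b hab
      · by_cases hbK : b ∈ K
        · exact Or.inr ⟨(hbip.2.2 hab).1 ha, hbK⟩
        · exact Or.inl ⟨fun hbD => haE.1 (hDcl b hbD a hab.symm haE.2), hbK⟩
      · exact absurd ha ((hB a).1 haB.1))
  have hAD : A ∩ (D ∪ (B ∩ K)) = A ∩ D := by
    ext z; have := hB z; simp only [Set.mem_inter_iff, Set.mem_union]; tauto
  have hAE : A ∩ (E ∪ (B ∩ K)) = A ∩ E := by
    ext z; have := hB z; simp only [Set.mem_inter_iff, Set.mem_union]; tauto
  have hBD : (B ∩ (D ∪ (B ∩ K))).ncard ≤ (B ∩ D).ncard + (B ∩ K).ncard := by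
    rw [Set.inter_union_distrib_left, ← Set.inter_assoc, Set.inter_self]
    exact Set.ncard_union_le _ _
  have hBE : (B ∩ (E ∪ (B ∩ K))).ncard ≤ (B ∩ E).ncard + (B ∩ K).ncard := by
    rw [Set.inter_union_distrib_left, ← Set.inter_assoc, Set.inter_self]
    exact Set.ncard_union_le _ _
  have hsplit : ∀ C : Set V, C.ncard = (C ∩ D).ncard + (C ∩ E).ncard + (C ∩ K).ncard := by
    intro C
    rw [← Set.ncard_union_eq _ (Set.toFinite _) (Set.toFinite _),
      ← Set.ncard_union_eq _ (Set.toFinite _) (Set.toFinite _)]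
    · congr 1
      ext z
      simp only [Set.mem_union, Set.mem_inter_iff, E, Set.mem_ofPred_eq]
      tauto
    · rw [Set.disjoint_left]
      rintro z (hz | hz) hzK
      · exact hDK z hz.2 hzK.2
      · exact hz.2.2 hzK.2
    · rw [Set.disjoint_left]
      rintro z hz hzE
      exact hzE.2.1 hz.2
  have hKs : K.ncard = (A ∩ K).ncard + (B ∩ K).ncard := by
    rw [← Set.ncard_union_eq _ (Set.toFinite _) (Set.toFinite _)]
    · congr 1
      ext z
      have := hB z
      simp only [Set.mem_union, Set.mem_inter_iff]
      tauto
    · rw [Set.disjoint_left]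
      intro z hz hzE
      exact (hB z).1 hzE.1 hz.1
  rw [hAD] at h1
  rw [hAE] at h2
  have := hsplit A
  have := hsplit B
  omega

/-! ### Gluing two components along two paths -/

/-- Two disjoint vertex sets `S`, `T`, each containing two vertices and joined to the rest of `G`
only through edges leading to `X ⊆ A`, cannot be tight simultaneously: joining them along two
disjoint paths yields a smaller candidate. -/
theorem two_pieces {V : Type*} [Fintype V] {G : SimpleGraph V} {A B : Set V}
    (hmin : IsMinimalCandidate G A B) {X S T : Set V} (hX : X.Nonempty) (hXA : X ⊆ A)
    (hST : Disjoint S T) (hSX : Disjoint S X) (hTX : Disjoint T X)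
    (hS : S.Nontrivial) (hT : T.Nontrivial)
    (hSc : ∀ x ∈ S, ∀ y, G.Adj x y → y ∈ S ∨ y ∈ X)
    (hTc : ∀ x ∈ T, ∀ y, G.Adj x y → y ∈ T ∨ y ∈ X) :
    (A ∩ S).ncard + (A ∩ T).ncard + 2 < (B ∩ S).ncard + (B ∩ T).ncard := by
  classical
  have hbip := hmin.1.1
  have hB := bip_compl hbip
  have hST' : ∀ x ∈ S, x ∉ T := fun x hx => Set.disjoint_left.1 hST hx
  obtain ⟨s1, t1, s2, t2, P1, P2, hs1, hs2, ht1, ht2, hP⟩ :=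
    exists_two_disjoint (G := G) hS hT
      (fun x y => by
        obtain ⟨p, -⟩ := exists_walk_avoiding hmin ∅ (by simp) x y (by simp) (by simp)
        exact ⟨p⟩)
      (fun w x y hx hy => by
        obtain ⟨p, hp⟩ := exists_walk_avoiding hmin {w} (by simp) x y (by simpa) (by simpa)
        exact ⟨p, fun h => hp w h rfl⟩)
  obtain ⟨s1, t1, Q1, hs1, ht1, hQ1, hS1, hT1⟩ := trim P1 hs1 ht1
  obtain ⟨s2, t2, Q2, hs2, ht2, hQ2, hS2, hT2⟩ := trim P2 hs2 ht2
  have hQ : ∀ x ∈ Q1.support, x ∉ Q2.support := fun x h1 h2 => hP x (hQ1 x h1) (hQ2 x h2)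
  clear hP hQ1 hQ2 P1 P2
  -- a path leaving `S` at its first step enters `X ⊆ A`, so it starts in `B`
  have endB : ∀ (S T : Set V), Disjoint S T → (∀ x ∈ S, ∀ y, G.Adj x y → y ∈ S ∨ y ∈ X) →
      ∀ (s t : V) (q : G.Walk s t), s ∈ S → t ∈ T → (∀ x ∈ q.support, x ∈ S → x = s) →
      s ∈ B := by
    intro S T hST hSc s t q hs ht hq
    cases q with
    | nil => exact absurd ht (Set.disjoint_left.1 hST hs)
    | @cons _ b _ e q =>
      rcases hSc s hs b e with h | h
      · exact absurd (hq b (by simp) h) e.ne'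
      · exact (hbip.2.2 e.symm).1 (hXA h)
  have hs1B := endB S T hST hSc s1 t1 Q1 hs1 ht1 hS1
  have hs2B := endB S T hST hSc s2 t2 Q2 hs2 ht2 hS2
  have ht1B := endB T S hST.symm hTc t1 s1 Q1.reverse ht1 hs1 (by simpa using hT1)
  have ht2B := endB T S hST.symm hTc t2 s2 Q2.reverse ht2 hs2 (by simpa using hT2)
  have hs12 : s1 ≠ s2 := fun h => hQ s1 (by simp) (by simp [h])
  have ht12 : t1 ≠ t2 := fun h => hQ t1 (by simp) (by simp [h])
  let W : Set V := (S ∪ T) \ {t1, t2}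
  let φ : V → V := fun x => if x = t1 then s1 else if x = t2 then s2 else x
  let M : V → Set V := fun x =>
    if x = s1 then {z | z ∈ Q1.support} else if x = s2 then {z | z ∈ Q2.support} else {x}
  have hφS : ∀ x ∈ S, φ x = x := fun x hx => by
    have h1 : x ≠ t1 := fun h => hST' x hx (h ▸ ht1)
    have h2 : x ≠ t2 := fun h => hST' x hx (h ▸ ht2)
    simp [φ, h1, h2]
  have hφt1 : φ t1 = s1 := by simp [φ]
  have hφt2 : φ t2 = s2 := by simp [φ, ht12.symm]
  have hφo : ∀ x, x ≠ t1 → x ≠ t2 → φ x = x := fun x h1 h2 => by simp [φ, h1, h2]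
  have hM1 : M s1 = {z | z ∈ Q1.support} := by simp [M]
  have hM2 : M s2 = {z | z ∈ Q2.support} := by simp [M, hs12.symm]
  have hMo : ∀ x, x ≠ s1 → x ≠ s2 → M x = {x} := fun x h1 h2 => by simp [M, h1, h2]
  have hSW : ∀ x ∈ S, x ∈ W := fun x hx => by
    refine ⟨Or.inl hx, ?_⟩
    rintro (h | h)
    · exact hST' x hx (h ▸ ht1)
    · exact hST' x hx (h ▸ ht2)
  have hφW : ∀ x ∈ S ∪ T, φ x ∈ W := by
    intro x hx
    by_cases h1 : x = t1
    · rw [h1, hφt1]; exact hSW _ hs1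
    by_cases h2 : x = t2
    · rw [h2, hφt2]; exact hSW _ hs2
    rw [hφo x h1 h2]
    refine ⟨hx, ?_⟩
    rintro (h | h)
    exacts [h1 h, h2 h]
  have hnbr : ∀ a ∈ A, ∀ b, G.Adj a b → b ∉ X := fun a ha b hab hb =>
    (hB b).1 ((hbip.2.2 hab).1 ha) (hXA hb)
  have hφT : Set.InjOn φ T := by
    intro x hx y hy hxy
    have n1 : ∀ z ∈ T, z ≠ s1 := fun z hz h => hST' s1 hs1 (h ▸ hz)
    have n2 : ∀ z ∈ T, z ≠ s2 := fun z hz h => hST' s2 hs2 (h ▸ hz)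
    have := n1 x hx
    have := n2 x hx
    have := n1 y hy
    have := n2 y hy
    simp only [φ] at hxy
    grind
  -- the path `Q1` meets `W` only in `s1`, and `Q2` meets `W` only in `s2`
  have hQW1 : ∀ x ∈ W, x ∈ Q1.support → x = s1 := by
    rintro x ⟨hx | hx, hn⟩ hxQ
    · exact hS1 x hxQ hx
    · exact absurd (Or.inl (hT1 x hxQ hx)) hn
  have hQW2 : ∀ x ∈ W, x ∈ Q2.support → x = s2 := by
    rintro x ⟨hx | hx, hn⟩ hxQ
    · exact hS2 x hxQ hx
    · exact absurd (Or.inr (hT2 x hxQ hx)) hn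
  have main := no_smaller hmin W ?_ φ ?_ ?_ ?_ ?_ ?_ M ?_ ?_ ?_
  · have hAW : A ∩ W = (A ∩ S) ∪ (A ∩ T) := by
      ext x
      have h1 : x ∈ A → x ≠ t1 := fun h h' => (hB t1).1 ht1B (h' ▸ h)
      have h2 : x ∈ A → x ≠ t2 := fun h h' => (hB t2).1 ht2B (h' ▸ h)
      simp only [W, Set.mem_inter_iff, Set.mem_union, Set.mem_sdiff, Set.mem_insert_iff,
        Set.mem_singleton_iff]
      tauto
    have hBW : B ∩ W = ((B ∩ S) ∪ (B ∩ T)) \ {t1, t2} := by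
      ext x
      simp only [W, Set.mem_inter_iff, Set.mem_union, Set.mem_sdiff, Set.mem_insert_iff,
        Set.mem_singleton_iff]
      tauto
    have e1 : (A ∩ W).ncard = (A ∩ S).ncard + (A ∩ T).ncard := by
      rw [hAW, Set.ncard_union_eq _ (Set.toFinite _) (Set.toFinite _)]
      exact hST.mono Set.inter_subset_right Set.inter_subset_right
    have e2 : (B ∩ W).ncard + 2 = (B ∩ S).ncard + (B ∩ T).ncard := by
      rw [← Set.ncard_union_eq _ (Set.toFinite _) (Set.toFinite _), hBW,
        ← Set.ncard_pair ht12]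
      · apply Set.ncard_sdiff_add_ncard_of_subset _ (Set.toFinite _)
        rintro x (rfl | rfl)
        · exact Or.inr ⟨ht1B, ht1⟩
        · exact Or.inr ⟨ht2B, ht2⟩
      · exact hST.mono Set.inter_subset_right Set.inter_subset_right
    omega
  · obtain ⟨x, hx⟩ := hX
    intro h
    have : x ∈ W := h ▸ Set.mem_univ x
    rcases this.1 with h | h
    · exact Set.disjoint_left.1 hSX h hx
    · exact Set.disjoint_left.1 hTX h hx
  · intro u
    by_cases h1 : u = t1
    · rw [h1, hφt1]
      exact iff_of_false ((hB _).1 hs1B) ((hB _).1 ht1B)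
    by_cases h2 : u = t2
    · rw [h2, hφt2]
      exact iff_of_false ((hB _).1 hs2B) ((hB _).1 ht2B)
    rw [hφo u h1 h2]
  · intro a ha
    exact hφo a (fun h => (hB _).1 ht1B (h ▸ ha)) (fun h => (hB _).1 ht2B (h ▸ ha))
  · rintro a ha ⟨haS | haT, -⟩
    · intro x hx y hy hxy
      have hx' := (hSc a haS x hx).resolve_right (hnbr a ha x hx)
      have hy' := (hSc a haS y hy).resolve_right (hnbr a ha y hy)
      rwa [hφS x hx', hφS y hy'] at hxy
    · exact hφT.mono fun x hx => (hTc a haT x hx).resolve_right (hnbr a ha x hx)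
  · rintro a ha ⟨haS | haT, -⟩ b hab
    · exact hφW b (Or.inl ((hSc a haS b hab).resolve_right (hnbr a ha b hab)))
    · exact hφW b (Or.inr ((hTc a haT b hab).resolve_right (hnbr a ha b hab)))
  · exact ⟨s1, hs1B, hSW _ hs1⟩
  · intro x _
    by_cases h1 : x = s1
    · rw [h1, hM1]; exact Q1.connected_induce_support
    by_cases h2 : x = s2
    · rw [h2, hM2]; exact Q2.connected_induce_support
    rw [hMo x h1 h2]
    exact SimpleGraph.Connected.of_subsingleton
  · intro x hx y hy hxy
    rw [Set.disjoint_left]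
    intro z hzx hzy
    have n1 := hQW1 x hx
    have n2 := hQW2 x hx
    have n3 := hQW1 y hy
    have n4 := hQW2 y hy
    have n5 := hQ z
    simp only [M] at hzx hzy
    split_ifs at hzx hzy <;> simp only [Set.mem_ofPred_eq, Set.mem_singleton_iff] at hzx hzy <;>
      grind
  · intro u hu
    by_cases h1 : u = t1
    · rw [h1, hφt1, hM1]; simp
    by_cases h2 : u = t2
    · rw [h2, hφt2, hM2]; simp
    rw [hφo u h1 h2]
    by_cases h3 : u = s1
    · rw [h3, hM1]; simp
    by_cases h4 : u = s2
    · rw [h4, hM2]; simp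
    rw [hMo u h3 h4]; rfl

/-- The vertices of `G` in a component of `G \ X`. -/
def piece {V : Type*} {G : SimpleGraph V} {X : Set V}
    (c : (G.induce Xᶜ).ConnectedComponent) : Set V := Subtype.val '' c.supp

theorem mem_piece {V : Type*} {G : SimpleGraph V} {X : Set V}
    {c : (G.induce Xᶜ).ConnectedComponent} {x : V} :
    x ∈ piece c ↔ ∃ h : x ∉ X, (G.induce Xᶜ).connectedComponentMk ⟨x, h⟩ = c := by
  simp [piece, SimpleGraph.ConnectedComponent.mem_supp_iff]

theorem piece_closed {V : Type*} {G : SimpleGraph V} {X : Set V}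
    {c : (G.induce Xᶜ).ConnectedComponent} {x y : V} (hx : x ∈ piece c) (h : G.Adj x y) :
    y ∈ piece c ∨ y ∈ X := by
  by_cases hy : y ∈ X
  · exact Or.inr hy
  · left
    obtain ⟨hx', rfl⟩ := mem_piece.1 hx
    refine mem_piece.2 ⟨hy, ?_⟩
    apply SimpleGraph.ConnectedComponent.sound
    have : (G.induce Xᶜ).Adj ⟨y, hy⟩ ⟨x, hx'⟩ := h.symm
    exact this.reachable

theorem sum_piece {V : Type*} [Fintype V] {G : SimpleGraph V} {X : Set V}
    [Fintype (G.induce Xᶜ).ConnectedComponent] (C : Set V) :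
    ∑ c : (G.induce Xᶜ).ConnectedComponent, (C ∩ piece c).ncard = (C \ X).ncard := by
  classical
  have h : C \ X = ⋃ c : (G.induce Xᶜ).ConnectedComponent, C ∩ piece c := by
    ext x
    simp only [Set.mem_sdiff, Set.mem_iUnion, Set.mem_inter_iff, mem_piece]
    constructor
    · rintro ⟨h1, h2⟩
      exact ⟨_, h1, h2, rfl⟩
    · rintro ⟨_, h1, h2, _⟩
      exact ⟨h1, h2⟩
  rw [h, Set.ncard_iUnion_of_finite (fun _ => Set.toFinite _), finsum_eq_sum_of_fintype]
  intro c d hcd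
  rw [Function.onFun, Set.disjoint_left]
  rintro x ⟨-, hx⟩ ⟨-, hy⟩
  obtain ⟨_, rfl⟩ := mem_piece.1 hx
  obtain ⟨_, rfl⟩ := mem_piece.1 hy
  exact hcd rfl

end MinCand

/-- In a minimal candidate, if `X ⊆ A` is nonempty and `G \ X` has exactly `|X|`
components, then at most one component of `G \ X` has more than one vertex. -/
theorem minimalCandidate_atMostOneBigComponent {V : Type} [Fintype V] (G : SimpleGraph V)
    (A B : Set V) (hmin : IsMinimalCandidate G A B) (X : Set V) (hne : X.Nonempty)
    (hXA : X ⊆ A) (hcomp : Nat.card (G.induce Xᶜ).ConnectedComponent = X.ncard) :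
    ∀ c d : (G.induce Xᶜ).ConnectedComponent,
      1 < c.supp.ncard → 1 < d.supp.ncard → c = d := by

  classical
  intro c d hc hd
  by_contra hcd
  have : Fintype (G.induce Xᶜ).ConnectedComponent := Fintype.ofFinite _
  have htriv : ∀ e : (G.induce Xᶜ).ConnectedComponent, 1 < e.supp.ncard →
      (MinCand.piece e).Nontrivial := by
    intro e he
    rw [← Set.one_lt_ncard_iff_nontrivial, MinCand.piece,
      Set.ncard_image_of_injective _ Subtype.val_injective]
    exact he
  have hdisj : ∀ e : (G.induce Xᶜ).ConnectedComponent, Disjoint (MinCand.piece e) X := by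
    intro e
    rw [Set.disjoint_left]
    exact fun x hx => (MinCand.mem_piece.1 hx).1
  have hcd' : Disjoint (MinCand.piece c) (MinCand.piece d) := by
    rw [Set.disjoint_left]
    rintro x hx hy
    obtain ⟨_, rfl⟩ := MinCand.mem_piece.1 hx
    obtain ⟨_, rfl⟩ := MinCand.mem_piece.1 hy
    exact hcd rfl
  have hbip := hmin.1.1
  have hB := MinCand.bip_compl hbip
  have h1 := MinCand.two_pieces hmin hne hXA hcd' (hdisj c) (hdisj d) (htriv c hc) (htriv d hd)
    (fun x hx y => MinCand.piece_closed hx) (fun x hx y => MinCand.piece_closed hx)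
  have hpos : ∀ e : (G.induce Xᶜ).ConnectedComponent,
      (A ∩ MinCand.piece e).ncard + 1 ≤ (B ∩ MinCand.piece e).ncard := by
    intro e
    refine MinCand.closed_lt hmin _ ?_ ?_ ?_
    · obtain ⟨x, hx⟩ := hne
      intro h
      exact Set.disjoint_left.1 (hdisj e) (h ▸ Set.mem_univ x) hx
    · obtain ⟨x, hx⟩ := e.nonempty_supp
      exact ⟨x, x, hx, rfl⟩
    · intro a ha hae b hab
      exact (MinCand.piece_closed hae hab).resolve_right
        fun hb => (hB b).1 ((hbip.2.2 hab).1 ha) (hXA hb)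
  -- some component contributes at least two to the sum of `|B ∩ C| - |A ∩ C|`
  have hlt : (A \ X).ncard + X.ncard < (B \ X).ncard := by
    rw [← MinCand.sum_piece (G := G) A, ← MinCand.sum_piece (G := G) B, ← hcomp,
      Nat.card_eq_fintype_card, Fintype.card_eq_sum_ones, ← Finset.sum_add_distrib]
    refine Finset.sum_lt_sum (fun e _ => hpos e) ?_
    by_contra! hle
    have := hle c (Finset.mem_univ _)
    have := hle d (Finset.mem_univ _)
    omega
  have hA := Set.ncard_sdiff_add_ncard_of_subset hXA (Set.toFinite _)
  have hBX : (B \ X).ncard ≤ B.ncard := Set.ncard_le_ncard Set.sdiff_subset (Set.toFinite _)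
  have := hmin.1.2.1
  omega
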